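/- Let (X, σ_X) be a one-sided subshift over a finite alphabet and let Φ = (log φ_n)_{n=1}^∞ ∈ C_sa(X, σ_X) be generated by a sub-multiplicative function φ : L(X) → [0,∞). Then the set I(Φ) of equilibrium states of Φ is a non-empty compact convex subset of M(X, σ_X), and each extreme point of I(Φ) is an ergodic measure. -/

import Mathlib

open MeasureTheory Filter Topology
open scoped Classical ENNReal NNReal

noncomputable section

/-- The left shift on one-sided sequences. -/
def shiftMap {A : Type} : (ℕ → A) → (ℕ → A) := fun x n => x (n + 1)

/-- The cylinder set of a finite word. -/
def cyl {A : Type} (I : List A) : Set (ℕ → A) :=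
  {x | ∀ i : Fin I.length, x i = I.get i}

/-- Membership of a word in the language of `X`. -/
def Lang {A : Type} (X : Set (ℕ → A)) (I : List A) : Prop :=
  (cyl I ∩ X).Nonempty

/-- `X` is a (nonempty) one-sided subshift. -/
def IsSubshift {A : Type} [TopologicalSpace A] (X : Set (ℕ → A)) : Prop :=
  X.Nonempty ∧ IsCompact X ∧ shiftMap '' X ⊆ X

/-- weak `p`-specification -/
def WeakSpecification {A : Type} (X : Set (ℕ → A)) (p : ℕ) : Prop :=
  ∀ I J : List A, Lang X I → Lang X J →
    ∃ K : List A, K.length ≤ p ∧ Lang X (I ++ K ++ J)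

/-- `p`-specification -/
def Specification {A : Type} (X : Set (ℕ → A)) (p : ℕ) : Prop :=
  ∀ I J : List A, Lang X I → Lang X J →
    ∃ K : List A, K.length = p ∧ Lang X (I ++ K ++ J)

/-- invariant probability measures supported on `X` (predicate on plain measures) -/
def InvOn {A : Type} [MeasurableSpace A] (X : Set (ℕ → A)) (μ : Measure (ℕ → A)) : Prop :=
  IsProbabilityMeasure μ ∧ μ.map shiftMap = μ ∧ μ X = 1

/-- the set of shift-invariant probability measures on `X` -/
def MInv {A : Type} [MeasurableSpace A] (X : Set (ℕ → A)) :
    Set (ProbabilityMeasure (ℕ → A)) :=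
  {μ | (μ : Measure (ℕ → A)).map shiftMap = (μ : Measure (ℕ → A)) ∧
    (μ : Measure (ℕ → A)) X = 1}

/-- measure of a word: `μ([I] ∩ X)` -/
def mw {A : Type} [MeasurableSpace A] (X : Set (ℕ → A)) (μ : Measure (ℕ → A))
    (I : List A) : ℝ :=
  (μ (cyl I ∩ X)).toReal

/-- the initial word of length `n` of a sequence -/
def wordOf {A : Type} (x : ℕ → A) (n : ℕ) : List A := List.ofFn (fun i : Fin n => x i)

/-- `n`-block entropy -/
def Hblock {A : Type} [Fintype A] [MeasurableSpace A] (X : Set (ℕ → A))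
    (μ : Measure (ℕ → A)) (n : ℕ) : ℝ :=
  -∑ w : Fin n → A, mw X μ (List.ofFn w) * Real.log (mw X μ (List.ofFn w))

/-- measure-theoretic entropy (the limit exists for invariant measures; `liminf` realizes it) -/
def ent {A : Type} [Fintype A] [MeasurableSpace A] (X : Set (ℕ → A))
    (μ : Measure (ℕ → A)) : ℝ :=
  liminf (fun n : ℕ => Hblock X μ n / n) atTop

/-- extended logarithm: `log t`, with value `⊥` for `t ≤ 0` -/
def elog (t : ℝ) : EReal := if t ≤ 0 then ⊥ else ((Real.log t : ℝ) : EReal)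

/-- the integral `∫ log g dμ`, valued in `ℝ ∪ {−∞}` -/
def intlog {Ω : Type*} [MeasurableSpace Ω] (μ : Measure Ω) (g : Ω → ℝ) : EReal :=
  ((∫⁻ x, ENNReal.ofReal (Real.log (g x)) ∂μ : ℝ≥0∞) : EReal) -
    ((∫⁻ x, (if g x ≤ 0 then (⊤ : ℝ≥0∞) else ENNReal.ofReal (-Real.log (g x))) ∂μ : ℝ≥0∞) : EReal)

/-- sub-additive potential `Φ = (log φ_n)_{n ≥ 1}` -/
def SubaddPot {A : Type} [TopologicalSpace A] (X : Set (ℕ → A))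
    (φ : ℕ → (ℕ → A) → ℝ) : Prop :=
  (∀ n, 1 ≤ n → ContinuousOn (φ n) X) ∧
  (∀ n, 1 ≤ n → ∀ x ∈ X, 0 ≤ φ n x) ∧
  ∃ c > (0:ℝ), ∀ n m : ℕ, 1 ≤ n → 1 ≤ m → ∀ x ∈ X,
    φ (n + m) x ≤ c * φ n x * φ m (shiftMap^[n] x)

/-- `Φ_*(μ) = lim (1/n) ∫ log φ_n dμ` (realized as a `liminf` in `EReal`) -/
def PhiStar {A : Type} [MeasurableSpace A] (μ : Measure (ℕ → A))
    (φ : ℕ → (ℕ → A) → ℝ) : EReal :=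
  liminf (fun n : ℕ => (((n : ℝ)⁻¹ : ℝ) : EReal) * intlog μ (φ n)) atTop

/-- sub-multiplicative function on the language of `X` -/
def Submult {A : Type} (X : Set (ℕ → A)) (φ : List A → ℝ) : Prop :=
  (∀ I, Lang X I → 0 ≤ φ I) ∧ φ [] = 1 ∧
  ∃ c > (0:ℝ), ∀ I J : List A, Lang X (I ++ J) → φ (I ++ J) ≤ c⁻¹ * φ I * φ J

/-- the potential generated by a word function -/
def genPot {A : Type} (φ : List A → ℝ) : ℕ → (ℕ → A) → ℝ := fun n x => φ (wordOf x n)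

/-- the scaled potential `cΦ = (log φ_n^c)` -/
def scPot {Ω : Type*} (c : ℝ) (φ : ℕ → Ω → ℝ) : ℕ → Ω → ℝ := fun n x => φ n x ^ c

/-- the "pressure value" `Φ_*(μ) + h_μ` -/
def eqVal {A : Type} [Fintype A] [MeasurableSpace A] (X : Set (ℕ → A))
    (φ : ℕ → (ℕ → A) → ℝ) (μ : ProbabilityMeasure (ℕ → A)) : EReal :=
  PhiStar (μ : Measure (ℕ → A)) φ + ((ent X (μ : Measure (ℕ → A)) : ℝ) : EReal)

/-- the set of equilibrium states of `Φ` -/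
def EqSet {A : Type} [Fintype A] [MeasurableSpace A] (X : Set (ℕ → A))
    (φ : ℕ → (ℕ → A) → ℝ) : Set (ProbabilityMeasure (ℕ → A)) :=
  {μ | μ ∈ MInv X ∧ eqVal X φ μ = ⨆ η ∈ MInv X, eqVal X φ η}

/-- sequence map induced by a one-block map -/
def blockMap {A B : Type} (π : A → B) : (ℕ → A) → (ℕ → B) := fun x n => π (x n)

/-- pushforward of a probability measure under a one-block map -/
def pushM {A B : Type} [MeasurableSpace A] [MeasurableSpace B] (π : A → B)
    (μ : ProbabilityMeasure (ℕ → A)) : Measure (ℕ → B) :=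
  (μ : Measure (ℕ → A)).map (blockMap π)

/-- conditional equilibrium states of `Φ` over `ν` -/
def CondEqSet {A B : Type} [Fintype A] [MeasurableSpace A] [MeasurableSpace B]
    (X : Set (ℕ → A)) (π : A → B) (φ : ℕ → (ℕ → A) → ℝ) (ν : Measure (ℕ → B)) :
    Set (ProbabilityMeasure (ℕ → A)) :=
  {μ | μ ∈ MInv X ∧ pushM π μ = ν ∧
    eqVal X φ μ = ⨆ η ∈ {η | η ∈ MInv X ∧ pushM π η = ν}, eqVal X φ η}

/-- the projected word function `ψ(J) = Σ_{I : πI = J} φ(I)` -/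
def psiProj {A B : Type} [Fintype A] (X : Set (ℕ → A)) (π : A → B) (φ : List A → ℝ)
    (J : List B) : ℝ :=
  ∑ w : Fin J.length → A,
    if Lang X (List.ofFn w) ∧ List.map π (List.ofFn w) = J then φ (List.ofFn w) else 0

/-- `φ^{(2)}(J) = (Σ_{I : πI = J} φ(I)^{1/a₁})^{a₁}` -/
def phiTwo {A B : Type} [Fintype A] (X : Set (ℕ → A)) (π : A → B) (φ : List A → ℝ)
    (a₁ : ℝ) (J : List B) : ℝ :=
  (∑ w : Fin J.length → A,
    if Lang X (List.ofFn w) ∧ List.map π (List.ofFn w) = J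
    then φ (List.ofFn w) ^ a₁⁻¹ else 0) ^ a₁

/-- `a`-weighted pressure value for `k = 2` -/
def wVal2 {A B : Type} [Fintype A] [Fintype B] [MeasurableSpace A] [MeasurableSpace B]
    (X : Set (ℕ → A)) (Y : Set (ℕ → B)) (π : A → B) (φ : ℕ → (ℕ → A) → ℝ)
    (a₁ a₂ : ℝ) (μ : ProbabilityMeasure (ℕ → A)) : EReal :=
  PhiStar (μ : Measure (ℕ → A)) φ +
    ((a₁ * ent X (μ : Measure (ℕ → A)) + a₂ * ent Y (pushM π μ) : ℝ) : EReal)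

/-- the set of `a`-weighted equilibrium states, `k = 2` -/
def WEqSet2 {A B : Type} [Fintype A] [Fintype B] [MeasurableSpace A] [MeasurableSpace B]
    (X : Set (ℕ → A)) (Y : Set (ℕ → B)) (π : A → B) (φ : ℕ → (ℕ → A) → ℝ)
    (a₁ a₂ : ℝ) : Set (ProbabilityMeasure (ℕ → A)) :=
  {μ | μ ∈ MInv X ∧ wVal2 X Y π φ a₁ a₂ μ = ⨆ η ∈ MInv X, wVal2 X Y π φ a₁ a₂ η}

/-- convexity of a set of probability measures -/
def ConvexPM {Ω : Type*} [MeasurableSpace Ω] (S : Set (ProbabilityMeasure Ω)) : Prop :=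
  ∀ μ₁ ∈ S, ∀ μ₂ ∈ S, ∀ t : ℝ, 0 ≤ t → t ≤ 1 → ∀ μ : ProbabilityMeasure Ω,
    (μ : Measure Ω) = ENNReal.ofReal t • (μ₁ : Measure Ω) +
      ENNReal.ofReal (1 - t) • (μ₂ : Measure Ω) → μ ∈ S

/-- extreme points of a set of probability measures -/
def IsExtremePM {Ω : Type*} [MeasurableSpace Ω] (S : Set (ProbabilityMeasure Ω))
    (μ : ProbabilityMeasure Ω) : Prop :=
  μ ∈ S ∧ ∀ μ₁ ∈ S, ∀ μ₂ ∈ S, ∀ t : ℝ, 0 < t → t < 1 →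
    (μ : Measure Ω) = ENNReal.ofReal t • (μ₁ : Measure Ω) +
      ENNReal.ofReal (1 - t) • (μ₂ : Measure Ω) → μ₁ = μ₂

/-- the class `Ω_w(A*, p)` -/
def OmegaW {A : Type} [Fintype A] (p : ℕ) (f : List A → ℝ) : Prop :=
  (∀ I, 0 ≤ f I ∧ f I ≤ 1) ∧
  ∃ c > (0:ℝ),
    (∀ n : ℕ, ∑ w : Fin n → A, f (List.ofFn w) = 1) ∧
    (∀ I J : List A, ∃ K : List A, K.length ≤ p ∧ c * (f I * f J) ≤ f (I ++ K ++ J)) ∧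
    (∀ I : List A, ∃ i j : A, c * f I ≤ f (i :: I) ∧ c * f I ≤ f (I ++ [j]))

/-- the class `Ω(A*, p)` -/
def OmegaS {A : Type} [Fintype A] (p : ℕ) (f : List A → ℝ) : Prop :=
  (∀ I, 0 ≤ f I ∧ f I ≤ 1) ∧
  ∃ c > (0:ℝ),
    (∀ n : ℕ, ∑ w : Fin n → A, f (List.ofFn w) = 1) ∧
    (∀ I J : List A, ∃ K : List A, K.length = p ∧ c * (f I * f J) ≤ f (I ++ K ++ J))

/-- `f_{m,n}(I)` -/
def fmn {A : Type} [Fintype A] (f : List A → ℝ) (m n : ℕ) (I : List A) : ℝ :=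
  ∑ u : Fin m → A, ∑ v : Fin n → A, f (List.ofFn u ++ I ++ List.ofFn v)

/-- `f*(I) = sup_{m,n} f_{m,n}(I)` -/
def fstar {A : Type} [Fintype A] (f : List A → ℝ) (I : List A) : ℝ :=
  ⨆ m : ℕ, ⨆ n : ℕ, fmn f m n I

/-- the class `D_w(X, p)` -/
def Dw {A : Type} (X : Set (ℕ → A)) (p : ℕ) (φ : List A → ℝ) : Prop :=
  (∀ I, Lang X I → 0 ≤ φ I) ∧ (∃ I, Lang X I ∧ I ≠ [] ∧ 0 < φ I) ∧
  ∃ c : ℝ, 0 < c ∧ c ≤ 1 ∧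
    (∀ I J : List A, Lang X (I ++ J) → φ (I ++ J) ≤ c⁻¹ * φ I * φ J) ∧
    (∀ I J : List A, Lang X I → Lang X J →
      ∃ K : List A, K.length ≤ p ∧ Lang X (I ++ K ++ J) ∧
        c * (φ I * φ J) ≤ φ (I ++ K ++ J))

/-- the class `D(X, p)` -/
def Ds {A : Type} (X : Set (ℕ → A)) (p : ℕ) (φ : List A → ℝ) : Prop :=
  (∀ I, Lang X I → 0 ≤ φ I) ∧ (∃ I, Lang X I ∧ I ≠ [] ∧ 0 < φ I) ∧
  ∃ c : ℝ, 0 < c ∧ c ≤ 1 ∧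
    (∀ I J : List A, Lang X (I ++ J) → φ (I ++ J) ≤ c⁻¹ * φ I * φ J) ∧
    (∀ I J : List A, Lang X I → Lang X J →
      ∃ K : List A, K.length = p ∧ Lang X (I ++ K ++ J) ∧
        c * (φ I * φ J) ≤ φ (I ++ K ++ J))

end

noncomputable section

/-- iterated one-block maps along a chain of alphabets: `tauFrom π j i : B j → B (j+i)` -/
def tauFrom {B : ℕ → Type} (π : ∀ i, B i → B (i+1)) (j : ℕ) : (i : ℕ) → B j → B (j + i)
  | 0 => id
  | (i+1) => fun a => π (j + i) (tauFrom π j i a)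

/-- weighted pressure value along a chain starting at index `j`, with `k` weights `w 0, …, w (k-1)` -/
def wValGen {B : ℕ → Type} [∀ i, Fintype (B i)] [∀ i, MeasurableSpace (B i)]
    (π : ∀ i, B i → B (i+1)) (X : ∀ i, Set (ℕ → B i)) (j k : ℕ) (w : ℕ → ℝ)
    (φ : ℕ → (ℕ → B j) → ℝ) (μ : ProbabilityMeasure (ℕ → B j)) : EReal :=
  PhiStar (μ : Measure (ℕ → B j)) φ +
    ((∑ i ∈ Finset.range k, w i *
      ent (X (j + i)) ((μ : Measure (ℕ → B j)).map (blockMap (tauFrom π j i))) : ℝ) : EReal)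

/-- weighted equilibrium states along a chain -/
def wEqSetGen {B : ℕ → Type} [∀ i, Fintype (B i)] [∀ i, MeasurableSpace (B i)]
    (π : ∀ i, B i → B (i+1)) (X : ∀ i, Set (ℕ → B i)) (j k : ℕ) (w : ℕ → ℝ)
    (φ : ℕ → (ℕ → B j) → ℝ) : Set (ProbabilityMeasure (ℕ → B j)) :=
  {μ | μ ∈ MInv (X j) ∧
    wValGen π X j k w φ μ = ⨆ η ∈ MInv (X j), wValGen π X j k w φ η}

end

/-!
On the invariant measures of a subshift `X`, the integrals `∫ log φₙ dμ` and the block entropies are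
subadditive in `n` up to a constant and affine in `μ` up to a bounded error. Their growth rates
`Φ_*(μ)` and `h_μ` are therefore affine functions of `μ`; by Fekete's lemma they are also infima of
upper semicontinuous ones. Hence `μ ↦ Φ_*(μ) + h_μ` is affine and upper semicontinuous on the
compact set of invariant measures on `X`, which is nonempty by Krylov–Bogoliubov. Its maximizers
form a nonempty compact face of that set, itself a face of the set of all invariant measures; so an
extreme point of the set of maximizers is an extreme invariant measure, and those are ergodic.
-/

section ExtendedReals

lemma inv_natCast_mul_bot {n : ℕ} (hn : n ≠ 0) : (((n : ℝ)⁻¹ : ℝ) : EReal) * ⊥ = ⊥ :=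
  EReal.coe_mul_bot_of_pos (by positivity)

lemma eventually_inv_mul_lt_of_subadditive {u : ℕ → EReal} (hu : ∀ n, u n ≠ ⊤)
    (hsub : ∀ m n, u (m + n) ≤ u m + u n) {k : ℕ} (hk : k ≠ 0) {L : EReal}
    (hL : (((k : ℝ)⁻¹ : ℝ) : EReal) * u k < L) :
    ∀ᶠ n : ℕ in atTop, (((n : ℝ)⁻¹ : ℝ) : EReal) * u n < L := by
  by_cases hbot : ∃ j, u j = ⊥
  · obtain ⟨j, hj⟩ := hbot
    have hbot_from : ∀ n ≥ j, u n = ⊥ := fun n hn ↦ by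
      simpa only [Nat.add_sub_cancel' hn, hj, EReal.bot_add, le_bot_iff] using hsub j (n - j)
    filter_upwards [eventually_ge_atTop j, eventually_ne_atTop 0] with n hjn hn
    rw [hbot_from n hjn, inv_natCast_mul_bot hn]
    exact hL.bot_lt
  · push Not at hbot
    lift u to ℕ → ℝ using fun n ↦ ⟨hu n, hbot n⟩
    beta_reduce at hsub hL ⊢
    have hu_sub : Subadditive u := fun m n ↦ by exact_mod_cast hsub m n
    obtain ⟨r, hkr, hrL⟩ := EReal.lt_iff_exists_real_btwn.1 hL
    have hdiv : u k / k < r := by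
      rw [div_eq_inv_mul]
      exact_mod_cast hkr
    filter_upwards [hu_sub.eventually_div_lt_of_div_lt hk hdiv] with n hn
    rw [div_eq_inv_mul] at hn
    exact lt_trans (by exact_mod_cast hn) hrL

/-- Fekete's lemma with values in `[-∞, ∞)`. -/
lemma tendsto_inv_mul_of_subadditive {u : ℕ → EReal} (hu : ∀ n, u n ≠ ⊤)
    (hsub : ∀ m n, u (m + n) ≤ u m + u n) :
    Tendsto (fun n : ℕ ↦ (((n : ℝ)⁻¹ : ℝ) : EReal) * u n) atTop
      (𝓝 (⨅ (n : ℕ) (_ : n ≠ 0), (((n : ℝ)⁻¹ : ℝ) : EReal) * u n)) := by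
  refine tendsto_order.2 ⟨fun a ha ↦ ?_, fun a ha ↦ ?_⟩
  · filter_upwards [eventually_ne_atTop 0] with n hn
    exact ha.trans_le (iInf₂_le n hn)
  · simp only [iInf_lt_iff] at ha
    obtain ⟨k, hk, hka⟩ := ha
    exact eventually_inv_mul_lt_of_subadditive hu hsub hk hka

lemma tendsto_inv_mul_of_almost_subadditive {u : ℕ → EReal} {k : ℝ} (hu : ∀ n, u n ≠ ⊤)
    (hsub : ∀ m n, u (m + n) ≤ k + u m + u n) :
    Tendsto (fun n : ℕ ↦ (((n : ℝ)⁻¹ : ℝ) : EReal) * u n) atTop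
      (𝓝 (⨅ (n : ℕ) (_ : n ≠ 0), (((n : ℝ)⁻¹ : ℝ) : EReal) * (k + u n))) := by
  have hshift := tendsto_inv_mul_of_subadditive (u := fun n ↦ k + u n)
    (fun n ↦ EReal.add_ne_top (EReal.coe_ne_top k) (hu n))
    fun m n ↦ (add_le_add_right (hsub m n) (k : EReal)).trans_eq (by ac_rfl)
  have hcorr : Tendsto (fun n : ℕ ↦ (((n : ℝ)⁻¹ * -k : ℝ) : EReal)) atTop (𝓝 ((0 : ℝ) : EReal)) :=
    (continuous_coe_real_ereal.tendsto 0).comp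
      (by simpa using tendsto_inv_atTop_nhds_zero_nat.mul_const (-k))
  have hsum := (EReal.continuousAt_add (.inl (EReal.coe_ne_top 0)) (.inl (EReal.coe_ne_bot 0))
    ).tendsto.comp (hcorr.prodMk_nhds hshift)
  simp only [EReal.coe_zero, zero_add] at hsum
  refine hsum.congr fun n ↦ ?_
  have hn : (0 : EReal) ≤ (((n : ℝ)⁻¹ : ℝ) : EReal) := EReal.coe_nonneg.2 (by positivity)
  rw [Function.comp_apply, EReal.coe_mul, ← EReal.left_distrib_of_nonneg_of_ne_top hn
    (EReal.coe_ne_top _), ← add_assoc, ← EReal.coe_add, neg_add_cancel, EReal.coe_zero, zero_add]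

lemma coe_mul_ne_top {p : ℝ} (hp : 0 ≤ p) {e : EReal} (he : e ≠ ⊤) : (p : EReal) * e ≠ ⊤ := by
  induction e with
  | bot =>
    rcases hp.eq_or_lt with rfl | hp
    · simp
    · simp [EReal.coe_mul_bot_of_pos hp]
  | coe e => exact_mod_cast EReal.coe_ne_top (p * e)
  | top => exact absurd rfl he

variable {ι κ : Type*}

lemma sum_ne_top {s : Finset ι} {f : ι → EReal} (hf : ∀ i ∈ s, f i ≠ ⊤) :
    ∑ i ∈ s, f i ≠ ⊤ :=
  Finset.sum_induction f (· ≠ ⊤) (fun _ _ ↦ EReal.add_ne_top) EReal.zero_ne_top hf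

lemma coe_mul_sum {t : ℝ} (ht : 0 ≤ t) (s : Finset ι) (f : ι → EReal) :
    (t : EReal) * ∑ i ∈ s, f i = ∑ i ∈ s, (t : EReal) * f i := by
  induction s using Finset.cons_induction with
  | empty => simp
  | cons i s hi ih =>
    rw [Finset.sum_cons, Finset.sum_cons, EReal.left_distrib_of_nonneg_of_ne_top
      (EReal.coe_nonneg.2 ht) (EReal.coe_ne_top t), ih]

lemma coe_sum_mul (s : Finset ι) {p : ι → ℝ} (hp : ∀ i ∈ s, 0 ≤ p i) (e : EReal) :
    ((∑ i ∈ s, p i : ℝ) : EReal) * e = ∑ i ∈ s, (p i : EReal) * e := by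
  induction s using Finset.cons_induction with
  | empty => simp
  | cons i s hi ih =>
    rw [Finset.forall_mem_cons] at hp
    rw [Finset.sum_cons, Finset.sum_cons, EReal.coe_add, EReal.right_distrib_of_nonneg
      (EReal.coe_nonneg.2 hp.1) (EReal.coe_nonneg.2 (Finset.sum_nonneg hp.2)), ih hp.2]

lemma sum_coe_mul_const_add {s : Finset ι} {p : ι → ℝ} (hp : ∀ i ∈ s, 0 ≤ p i)
    (hsum : ∑ i ∈ s, p i = 1) (k : EReal) (f : ι → EReal) :
    ∑ i ∈ s, (p i : EReal) * (k + f i) = k + ∑ i ∈ s, (p i : EReal) * f i := by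
  calc ∑ i ∈ s, (p i : EReal) * (k + f i)
      = ∑ i ∈ s, ((p i : EReal) * k + (p i : EReal) * f i) :=
        Finset.sum_congr rfl fun i hi ↦ EReal.left_distrib_of_nonneg_of_ne_top
          (EReal.coe_nonneg.2 (hp i hi)) (EReal.coe_ne_top _) _ _
    _ = _ := by rw [Finset.sum_add_distrib, ← coe_sum_mul s hp, hsum, EReal.coe_one, one_mul]

lemma sum_sum_coe_mul_add [Fintype ι] [Fintype κ] {p : ι → κ → ℝ} (hp : ∀ i j, 0 ≤ p i j)
    (e : ι → EReal) (f : κ → EReal) :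
    ∑ i, ∑ j, (p i j : EReal) * (e i + f j) =
      ∑ i, ((∑ j, p i j : ℝ) : EReal) * e i + ∑ j, ((∑ i, p i j : ℝ) : EReal) * f j := by
  calc ∑ i, ∑ j, (p i j : EReal) * (e i + f j)
      = ∑ i, ∑ j, (p i j : EReal) * e i + ∑ i, ∑ j, (p i j : EReal) * f j := by
        simp only [EReal.left_distrib_of_nonneg_of_ne_top (EReal.coe_nonneg.2 (hp _ _))
          (EReal.coe_ne_top _), Finset.sum_add_distrib]
    _ = _ := by
        rw [Finset.sum_comm (f := fun i j ↦ (p i j : EReal) * f j)]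
        simp only [coe_sum_mul _ fun i _ ↦ hp i _, coe_sum_mul _ fun j _ ↦ hp _ j]

lemma eq_left_of_le_of_eq_convex_combination {a b s : EReal} {t : ℝ} (ht0 : 0 < t) (ht1 : t < 1)
    (hs : s ≠ ⊤) (ha : a ≤ s) (hb : b ≤ s)
    (h : s = (t : EReal) * a + ((1 - t : ℝ) : EReal) * b) : a = s := by
  induction s with
  | top => exact absurd rfl hs
  | bot => exact le_bot_iff.1 ha
  | coe s =>
    have ha_bot : a ≠ ⊥ := by
      rintro rfl
      rw [EReal.coe_mul_bot_of_pos ht0, EReal.bot_add] at h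
      exact EReal.coe_ne_bot s h
    have hb_bot : b ≠ ⊥ := by
      rintro rfl
      rw [EReal.coe_mul_bot_of_pos (sub_pos.2 ht1), EReal.add_bot] at h
      exact EReal.coe_ne_bot s h
    lift a to ℝ using ⟨ne_top_of_le_ne_top hs ha, ha_bot⟩
    lift b to ℝ using ⟨ne_top_of_le_ne_top hs hb, hb_bot⟩
    norm_cast at h ha hb ⊢
    nlinarith

end ExtendedReals

section Semicontinuity

lemma continuous_const_mul_ereal (r : ℝ) : Continuous fun x : EReal ↦ (r : EReal) * x :=
  continuous_iff_continuousAt.2 fun _ ↦ EReal.Tendsto.const_mul tendsto_id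
    (.inl (EReal.coe_ne_bot r)) (.inl (EReal.coe_ne_top r))

variable {α : Type*} [TopologicalSpace α]

lemma upperSemicontinuous_coe_mul {p : α → ℝ} (hp : Continuous p) (hp0 : ∀ x, 0 ≤ p x)
    {e : EReal} (he : e ≠ ⊤) : UpperSemicontinuous fun x ↦ (p x : EReal) * e := by
  induction e with
  | top => exact absurd rfl he
  | coe e => exact (continuous_coe_real_ereal.comp (hp.mul_const e)).upperSemicontinuous
  | bot =>
    intro x y hxy
    beta_reduce at hxy ⊢
    rcases (hp0 x).eq_or_lt with hx | hx
    · rw [← hx, EReal.coe_zero, zero_mul] at hxy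
      refine Eventually.of_forall fun z ↦ lt_of_le_of_lt ?_ hxy
      exact mul_nonpos_of_nonneg_of_nonpos (EReal.coe_nonneg.2 (hp0 z)) bot_le
    · rw [EReal.coe_mul_bot_of_pos hx] at hxy
      filter_upwards [hp.continuousAt.eventually (lt_mem_nhds hx)] with z hz
      rwa [EReal.coe_mul_bot_of_pos hz]

lemma upperSemicontinuous_sum_ereal {ι : Type*} {s : Finset ι} {f : ι → α → EReal}
    (hf : ∀ i ∈ s, UpperSemicontinuous (f i)) (hf_top : ∀ i ∈ s, ∀ x, f i x ≠ ⊤) :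
    UpperSemicontinuous fun x ↦ ∑ i ∈ s, f i x := by
  induction s using Finset.cons_induction with
  | empty => simpa only [Finset.sum_empty] using upperSemicontinuous_const
  | cons i s hi ih =>
    rw [Finset.forall_mem_cons] at hf hf_top
    simp only [Finset.sum_cons]
    exact hf.1.add' (ih hf.2 hf_top.2) fun x ↦ EReal.continuousAt_add
      (.inl (hf_top.1 x)) (.inr (sum_ne_top fun j hj ↦ hf_top.2 j hj x))

lemma upperSemicontinuousOn_of_eqOn {γ : Type*} [Preorder γ] {f g : α → γ} {s : Set α}
    (hg : UpperSemicontinuous g) (hfg : Set.EqOn f g s) : UpperSemicontinuousOn f s :=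
  fun x hx ↦ UpperSemicontinuousWithinAt.congr_of_eventuallyEq (hg.upperSemicontinuousOn s x hx) hx
    (hfg.symm.eventuallyEq_of_mem self_mem_nhdsWithin)

variable {γ : Type*} [CompleteLinearOrder γ] {K : Set α} {f : α → γ}

lemma nonempty_maximizers (hK : K.Nonempty) (hKc : IsCompact K)
    (hf : UpperSemicontinuousOn f K) : {x | x ∈ K ∧ f x = ⨆ y ∈ K, f y}.Nonempty := by
  obtain ⟨x, hxK, hx⟩ := hf.exists_isMaxOn hK hKc
  exact ⟨x, hxK, (le_iSup₂ (f := fun y _ ↦ f y) x hxK).antisymm (iSup₂_le hx)⟩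

lemma isCompact_maximizers (hKc : IsCompact K) (hf : UpperSemicontinuousOn f K) :
    IsCompact {x | x ∈ K ∧ f x = ⨆ y ∈ K, f y} := by
  convert hf.isCompact_inter_preimage_Ici hKc (⨆ y ∈ K, f y) using 1
  ext x
  exact and_congr_right fun hx ↦
    ⟨fun h ↦ h.ge, fun h ↦ (le_iSup₂ (f := fun y _ ↦ f y) x hx).antisymm h⟩

end Semicontinuity

section FiniteEntropy

open Real

lemma negMulLog_add_mul_log_le {p q : ℝ} (hp : 0 ≤ p) (hq : 0 ≤ q) (hpq : q = 0 → p = 0) :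
    negMulLog p + p * log q ≤ q - p := by
  rcases hp.eq_or_lt with rfl | hp
  · simpa using hq
  have hq_pos : 0 < q := hq.lt_of_ne' fun h ↦ hp.ne' (hpq h)
  calc negMulLog p + p * log q = p * log (q / p) := by
        rw [log_div hq_pos.ne' hp.ne', negMulLog]
        ring
    _ ≤ p * (q / p - 1) := by gcongr; exact log_le_sub_one_of_pos (by positivity)
    _ = q - p := by field_simp

lemma negMulLog_add_le {x y : ℝ} (hx : 0 ≤ x) (hy : 0 ≤ y) :
    negMulLog (x + y) ≤ negMulLog x + negMulLog y := by
  rcases hx.eq_or_lt with rfl | hx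
  · simp
  rcases hy.eq_or_lt with rfl | hy
  · simp
  have hlog_x : x * log x ≤ x * log (x + y) := by gcongr; linarith
  have hlog_y : y * log y ≤ y * log (x + y) := by gcongr; linarith
  simp only [negMulLog]
  linarith

variable {ι κ : Type*} [Fintype ι] [Fintype κ]

lemma sum_negMulLog_le_neg_sum_mul_log {p q : ι → ℝ} (hp : ∀ i, 0 ≤ p i) (hq : ∀ i, 0 ≤ q i)
    (hpq : ∀ i, q i = 0 → p i = 0) (hsum : ∑ i, q i ≤ ∑ i, p i) :
    ∑ i, negMulLog (p i) ≤ -∑ i, p i * log (q i) := by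
  have hterm : ∑ i, (negMulLog (p i) + p i * log (q i)) ≤ ∑ i, (q i - p i) :=
    Finset.sum_le_sum fun i _ ↦ negMulLog_add_mul_log_le (hp i) (hq i) (hpq i)
  rw [Finset.sum_add_distrib, Finset.sum_sub_distrib] at hterm
  linarith

lemma sum_sum_negMulLog_le_add_marginals {p : ι → κ → ℝ} (hp : ∀ i j, 0 ≤ p i j)
    (hsum : ∑ i, ∑ j, p i j = 1) :
    ∑ i, ∑ j, negMulLog (p i j) ≤
      ∑ i, negMulLog (∑ j, p i j) + ∑ j, negMulLog (∑ i, p i j) := by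
  set a : ι → ℝ := fun i ↦ ∑ j, p i j
  set b : κ → ℝ := fun j ↦ ∑ i, p i j with hb
  have ha0 : ∀ i, 0 ≤ a i := fun i ↦ Finset.sum_nonneg fun j _ ↦ hp i j
  have hb0 : ∀ j, 0 ≤ b j := fun j ↦ Finset.sum_nonneg fun i _ ↦ hp i j
  have hpa : ∀ i j, a i = 0 → p i j = 0 := fun i j h ↦
    (Finset.sum_eq_zero_iff_of_nonneg fun j _ ↦ hp i j).1 h j (Finset.mem_univ j)
  have hpb : ∀ i j, b j = 0 → p i j = 0 := fun i j h ↦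
    (Finset.sum_eq_zero_iff_of_nonneg fun i _ ↦ hp i j).1 h i (Finset.mem_univ i)
  have hb_sum : ∑ j, b j = 1 := by rw [hb, Finset.sum_comm, hsum]
  have hlog : ∀ i j, p i j * log (a i * b j) = p i j * log (a i) + p i j * log (b j) := by
    intro i j
    rcases eq_or_ne (p i j) 0 with h | h
    · simp [h]
    · rw [log_mul (mt (hpa i j) h) (mt (hpb i j) h), mul_add]
  have hgibbs := sum_negMulLog_le_neg_sum_mul_log (p := fun x : ι × κ ↦ p x.1 x.2)
    (q := fun x ↦ a x.1 * b x.2) (fun x ↦ hp x.1 x.2) (fun x ↦ mul_nonneg (ha0 x.1) (hb0 x.2))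
    (fun x h ↦ (mul_eq_zero.1 h).elim (hpa x.1 x.2) (hpb x.1 x.2))
    (by simp only [Fintype.sum_prod_type, ← Finset.mul_sum, hb_sum, mul_one]; exact le_rfl)
  simp only [Fintype.sum_prod_type, hlog, Finset.sum_add_distrib] at hgibbs
  rw [Finset.sum_comm (f := fun i j ↦ p i j * log (b j))] at hgibbs
  simp only [← Finset.sum_mul] at hgibbs
  simpa only [negMulLog, neg_mul, Finset.sum_neg_distrib, neg_add] using hgibbs

end FiniteEntropy

section Words

lemma sum_real_inter_fiber {Ω β : Type*} [MeasurableSpace Ω] [Fintype β] [MeasurableSpace β]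
    [MeasurableSingletonClass β] (μ : Measure Ω) [IsFiniteMeasure μ] {f : Ω → β}
    (hf : Measurable f) (S : Set Ω) : ∑ b, μ.real (S ∩ f ⁻¹' {b}) = μ.real S := by
  have hfiber : ∀ b, MeasurableSet (f ⁻¹' {b}) := fun b ↦ hf (measurableSet_singleton b)
  calc ∑ b, μ.real (S ∩ f ⁻¹' {b}) = ∑ b, (μ.restrict S).real (f ⁻¹' {b}) := by
        simp only [measureReal_restrict_apply (hfiber _), Set.inter_comm S]
    _ = μ.real S := by
        rw [sum_measureReal_preimage_singleton _ fun b _ ↦ hfiber b]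
        simp

variable {A : Type}

lemma shiftMap_iterate_apply (m : ℕ) (x : ℕ → A) (k : ℕ) : shiftMap^[m] x k = x (m + k) := by
  induction m generalizing x with
  | zero => simp
  | succ m ih => rw [Function.iterate_succ_apply, ih, shiftMap, add_right_comm]

/-- The initial word of length `n`, as a function on `Fin n`; `wordOf` is its list version. -/
def initialWord (n : ℕ) (x : ℕ → A) : Fin n → A := fun i ↦ x i

lemma initialWord_add (m n : ℕ) (x : ℕ → A) :
    initialWord (m + n) x = Fin.append (initialWord m x) (initialWord n (shiftMap^[m] x)) := by
  ext i
  refine Fin.addCases (fun i ↦ ?_) (fun i ↦ ?_) i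
  · simp [initialWord]
  · simp [initialWord, shiftMap_iterate_apply]

lemma mem_cyl_ofFn {n : ℕ} {w : Fin n → A} {x : ℕ → A} :
    x ∈ cyl (List.ofFn w) ↔ initialWord n x = w := by
  have hlen := List.length_ofFn (f := w)
  simp only [cyl, Set.mem_ofPred_eq, initialWord, funext_iff, List.get_ofFn]
  exact ⟨fun h i ↦ h (i.cast hlen.symm), fun h i ↦ h (i.cast hlen)⟩

lemma cyl_ofFn {n : ℕ} (w : Fin n → A) : cyl (List.ofFn w) = initialWord n ⁻¹' {w} :=
  Set.ext fun _ ↦ mem_cyl_ofFn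

lemma cyl_ofFn_append {m n : ℕ} (u : Fin m → A) (v : Fin n → A) :
    cyl (List.ofFn (Fin.append u v)) =
      cyl (List.ofFn u) ∩ shiftMap^[m] ⁻¹' cyl (List.ofFn v) := by
  ext x
  simp only [Set.mem_inter_iff, Set.mem_preimage, mem_cyl_ofFn, initialWord_add]
  exact ((Fin.appendEquiv m n).injective.eq_iff
    (a := (initialWord m x, initialWord n (shiftMap^[m] x))) (b := (u, v))).trans Prod.mk_inj

lemma sum_append [Fintype A] {M : Type*} [AddCommMonoid M] {m n : ℕ}
    (F : (Fin (m + n) → A) → M) :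
    ∑ w, F w = ∑ u : Fin m → A, ∑ v : Fin n → A, F (Fin.append u v) := by
  rw [← (Fin.appendEquiv m n).sum_comp, Fintype.sum_prod_type]
  rfl

section Measurable

variable [MeasurableSpace A]

lemma measurable_initialWord (n : ℕ) : Measurable (initialWord n : (ℕ → A) → Fin n → A) :=
  measurable_pi_lambda _ fun i ↦ measurable_pi_apply (i : ℕ)

lemma measurable_shiftMap : Measurable (shiftMap : (ℕ → A) → ℕ → A) :=
  measurable_pi_lambda _ fun n ↦ measurable_pi_apply (n + 1)

/-- The `μ`-probability of the cylinder `[w]`. -/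
noncomputable def blockProb (μ : Measure (ℕ → A)) {n : ℕ} (w : Fin n → A) : ℝ :=
  μ.real (cyl (List.ofFn w))

lemma blockProb_nonneg (μ : Measure (ℕ → A)) {n : ℕ} (w : Fin n → A) : 0 ≤ blockProb μ w :=
  measureReal_nonneg

lemma blockProb_le_one (μ : Measure (ℕ → A)) [IsProbabilityMeasure μ] {n : ℕ} (w : Fin n → A) :
    blockProb μ w ≤ 1 :=
  measureReal_le_one

lemma lang_of_blockProb_ne_zero {X : Set (ℕ → A)} {μ : Measure (ℕ → A)}
    (hμX : ∀ᵐ x ∂μ, x ∈ X) {n : ℕ} {w : Fin n → A} (hw : blockProb μ w ≠ 0) :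
    Lang X (List.ofFn w) := by
  have hcyl : ∃ᵐ x ∂μ, x ∈ cyl (List.ofFn w) :=
    frequently_ae_mem_iff.2 fun h ↦ hw (by rw [blockProb, measureReal_def, h, ENNReal.toReal_zero])
  exact (hcyl.and_eventually hμX).exists

variable [MeasurableSingletonClass A]

lemma measurableSet_cyl_ofFn {n : ℕ} (w : Fin n → A) : MeasurableSet (cyl (List.ofFn w)) := by
  rw [cyl_ofFn]
  exact measurable_initialWord n (measurableSet_singleton w)

variable [Fintype A]

lemma sum_blockProb (μ : Measure (ℕ → A)) [IsProbabilityMeasure μ] (n : ℕ) :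
    ∑ w : Fin n → A, blockProb μ w = 1 := by
  simpa only [blockProb, cyl_ofFn, Set.univ_inter, probReal_univ] using
    sum_real_inter_fiber μ (measurable_initialWord n) Set.univ

lemma sum_blockProb_append_right (μ : Measure (ℕ → A)) [IsFiniteMeasure μ] {m : ℕ}
    (u : Fin m → A) (n : ℕ) :
    ∑ v : Fin n → A, blockProb μ (Fin.append u v) = blockProb μ u := by
  simp only [blockProb, cyl_ofFn_append, cyl_ofFn (n := n), ← Set.preimage_comp]
  exact sum_real_inter_fiber μ ((measurable_initialWord n).comp (measurable_shiftMap.iterate m)) _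

lemma sum_blockProb_append_left {μ : Measure (ℕ → A)} [IsFiniteMeasure μ]
    (hμ : MeasurePreserving shiftMap μ μ) (m : ℕ) {n : ℕ} (v : Fin n → A) :
    ∑ u : Fin m → A, blockProb μ (Fin.append u v) = blockProb μ v := by
  simp only [blockProb, cyl_ofFn_append, cyl_ofFn (n := m),
    Set.inter_comm (initialWord m ⁻¹' _), sum_real_inter_fiber μ (measurable_initialWord m)]
  exact (hμ.iterate m).measureReal_preimage (measurableSet_cyl_ofFn v).nullMeasurableSet

end Measurable

end Words

section BlockEntropy

variable {A : Type} [Fintype A] [MeasurableSpace A]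

/-- The Shannon entropy of the distribution of the initial word of length `n`; unlike `Hblock`,
it does not mention the subshift. -/
noncomputable def blockEntropy (μ : Measure (ℕ → A)) (n : ℕ) : ℝ :=
  ∑ w : Fin n → A, Real.negMulLog (blockProb μ w)

lemma blockEntropy_nonneg (μ : Measure (ℕ → A)) [IsProbabilityMeasure μ] (n : ℕ) :
    0 ≤ blockEntropy μ n :=
  Finset.sum_nonneg fun w _ ↦ Real.negMulLog_nonneg (blockProb_nonneg μ w) (blockProb_le_one μ w)

lemma Hblock_eq_blockEntropy {X : Set (ℕ → A)} {μ : Measure (ℕ → A)} (hμX : ∀ᵐ x ∂μ, x ∈ X)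
    (n : ℕ) : Hblock X μ n = blockEntropy μ n := by
  have hmw (w : Fin n → A) : mw X μ (List.ofFn w) = blockProb μ w :=
    measureReal_congr (inter_ae_eq_left_of_ae_eq_univ (eventuallyEq_univ.2 hμX))
  simp only [Hblock, hmw, blockEntropy, Real.negMulLog, neg_mul, Finset.sum_neg_distrib]

variable [MeasurableSingletonClass A] {μ : Measure (ℕ → A)} [IsProbabilityMeasure μ]

lemma subadditive_blockEntropy (hμ : MeasurePreserving shiftMap μ μ) :
    Subadditive (blockEntropy μ) := by
  intro m n
  have hmarg := sum_sum_negMulLog_le_add_marginals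
    (p := fun (u : Fin m → A) (v : Fin n → A) ↦ blockProb μ (Fin.append u v))
    (fun u v ↦ blockProb_nonneg μ _) (by rw [← sum_append, sum_blockProb])
  simp only [sum_blockProb_append_right, sum_blockProb_append_left hμ] at hmarg
  rwa [blockEntropy, sum_append]

variable {X : Set (ℕ → A)}

lemma tendsto_blockEntropy_div (hμ : MeasurePreserving shiftMap μ μ) (hμX : ∀ᵐ x ∂μ, x ∈ X) :
    Tendsto (fun n : ℕ ↦ blockEntropy μ n / n) atTop (𝓝 (ent X μ)) := by
  have hbdd : BddBelow (Set.range fun n : ℕ ↦ blockEntropy μ n / n) :=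
    ⟨0, Set.forall_mem_range.2 fun n ↦ div_nonneg (blockEntropy_nonneg μ n) n.cast_nonneg⟩
  have hlim := (subadditive_blockEntropy hμ).tendsto_lim hbdd
  simp only [ent, Hblock_eq_blockEntropy hμX]
  rwa [hlim.liminf_eq]

lemma coe_ent_eq_iInf (hμ : MeasurePreserving shiftMap μ μ) (hμX : ∀ᵐ x ∂μ, x ∈ X) :
    (ent X μ : EReal) =
      ⨅ (n : ℕ) (_ : n ≠ 0), (((n : ℝ)⁻¹ : ℝ) : EReal) * (blockEntropy μ n : EReal) := by
  refine tendsto_nhds_unique ?_ (tendsto_inv_mul_of_subadditive (fun n ↦ EReal.coe_ne_top _)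
    fun m n ↦ by exact_mod_cast subadditive_blockEntropy hμ m n)
  simpa only [Function.comp_def, div_eq_inv_mul, EReal.coe_mul] using
    (continuous_coe_real_ereal.tendsto _).comp (tendsto_blockEntropy_div hμ hμX)

end BlockEntropy

section LogIntegral

lemma elog_eq_log_ofReal (t : ℝ) : elog t = ENNReal.log (ENNReal.ofReal t) := by
  rcases le_or_gt t 0 with ht | ht
  · rw [elog, if_pos ht, ENNReal.ofReal_of_nonpos ht, ENNReal.log_zero]
  · rw [elog, if_neg ht.not_ge, ENNReal.log_ofReal, if_neg ht.not_ge]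

lemma elog_ne_top (t : ℝ) : elog t ≠ ⊤ := by
  rw [elog]
  split_ifs
  · exact bot_ne_top
  · exact EReal.coe_ne_top _

lemma elog_monotone : Monotone elog := fun s t hst ↦ by
  simpa only [elog_eq_log_ofReal] using ENNReal.log_monotone (ENNReal.ofReal_le_ofReal hst)

lemma elog_mul {s : ℝ} (hs : 0 ≤ s) (t : ℝ) : elog (s * t) = elog s + elog t := by
  simp only [elog_eq_log_ofReal, ENNReal.ofReal_mul hs, ENNReal.log_mul_add]

lemma coe_ennreal_sum_sub_sum {ι : Type*} (s : Finset ι) {a b : ι → ℝ≥0∞}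
    (ha : ∀ i ∈ s, a i ≠ ⊤) :
    ((∑ i ∈ s, a i : ℝ≥0∞) : EReal) - ((∑ i ∈ s, b i : ℝ≥0∞) : EReal) =
      ∑ i ∈ s, ((a i : EReal) - (b i : EReal)) := by
  induction s using Finset.cons_induction with
  | empty => simp
  | cons i s hi ih =>
    rw [Finset.forall_mem_cons] at ha
    rw [Finset.sum_cons, Finset.sum_cons, Finset.sum_cons, ← ih ha.2, EReal.coe_ennreal_add,
      EReal.coe_ennreal_add, sub_eq_add_neg, EReal.neg_add (.inl (EReal.coe_ennreal_ne_bot _))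
      (.inr (EReal.coe_ennreal_ne_bot _)), sub_eq_add_neg, sub_eq_add_neg, sub_eq_add_neg,
      add_add_add_comm]

/-- The summand of `intlog` at a value `t` taken with probability `p`. -/
lemma log_pos_part_sub_neg_part_mul {p : ℝ} (hp : 0 ≤ p) (t : ℝ) :
    ((ENNReal.ofReal (Real.log t) * ENNReal.ofReal p : ℝ≥0∞) : EReal) -
      (((if t ≤ 0 then ⊤ else ENNReal.ofReal (-Real.log t)) * ENNReal.ofReal p : ℝ≥0∞) : EReal) =
    (p : EReal) * elog t := by
  rcases hp.eq_or_lt with rfl | hp_pos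
  · simp
  rcases le_or_gt t 0 with ht | ht
  · rw [if_pos ht, elog, if_pos ht, ENNReal.top_mul (ENNReal.ofReal_pos.2 hp_pos).ne',
      EReal.coe_ennreal_top, EReal.coe_mul_bot_of_pos hp_pos, EReal.sub_top]
  · rw [if_neg ht.not_ge, elog, if_neg ht.not_ge]
    simp only [EReal.coe_ennreal_mul, EReal.coe_ennreal_ofReal, max_eq_left hp]
    norm_cast
    rw [← sub_mul, max_zero_sub_max_neg_zero_eq_self, mul_comm]

lemma intlog_comp {Ω β : Type*} [MeasurableSpace Ω] [Fintype β] [MeasurableSpace β]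
    [MeasurableSingletonClass β] (μ : Measure Ω) [IsFiniteMeasure μ] {f : Ω → β}
    (hf : Measurable f) (g : β → ℝ) :
    intlog μ (fun x ↦ g (f x)) = ∑ b, (μ.real (f ⁻¹' {b}) : EReal) * elog (g b) := by
  have hlintegral (G : β → ℝ≥0∞) :
      ∫⁻ x, G (f x) ∂μ = ∑ b, G b * ENNReal.ofReal (μ.real (f ⁻¹' {b})) := by
    rw [← lintegral_map (measurable_of_finite G) hf, lintegral_fintype]
    simp only [Measure.map_apply hf (measurableSet_singleton _),
      ofReal_measureReal (measure_ne_top μ _)]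
  rw [intlog, hlintegral fun b ↦ ENNReal.ofReal (Real.log (g b)),
    hlintegral fun b ↦ if g b ≤ 0 then ⊤ else ENNReal.ofReal (-Real.log (g b)),
    coe_ennreal_sum_sub_sum _ fun b _ ↦
      ENNReal.mul_ne_top ENNReal.ofReal_ne_top ENNReal.ofReal_ne_top]
  exact Finset.sum_congr rfl fun b _ ↦ log_pos_part_sub_neg_part_mul measureReal_nonneg (g b)

end LogIntegral

section Potential

lemma Lang.of_append_left {A : Type} {X : Set (ℕ → A)} {I J : List A} (h : Lang X (I ++ J)) :
    Lang X I := by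
  obtain ⟨x, hx, hxX⟩ := h
  refine ⟨x, fun i ↦ ?_, hxX⟩
  have hi := hx ⟨i, by rw [List.length_append]; omega⟩
  simpa only [List.get_eq_getElem, List.getElem_append_left i.isLt] using hi

lemma elog_append_le {A : Type} {X : Set (ℕ → A)} {φ : List A → ℝ}
    (hφ0 : ∀ I, Lang X I → 0 ≤ φ I) {c : ℝ} (hc : 0 < c)
    (hφc : ∀ I J, Lang X (I ++ J) → φ (I ++ J) ≤ c⁻¹ * φ I * φ J) {I J : List A}
    (h : Lang X (I ++ J)) :
    elog (φ (I ++ J)) ≤ Real.log c⁻¹ + elog (φ I) + elog (φ J) := by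
  have hc_inv : 0 < c⁻¹ := inv_pos.2 hc
  calc elog (φ (I ++ J)) ≤ elog (c⁻¹ * φ I * φ J) := elog_monotone (hφc I J h)
    _ = elog c⁻¹ + elog (φ I) + elog (φ J) := by
        rw [elog_mul (mul_nonneg hc_inv.le (hφ0 I h.of_append_left)), elog_mul hc_inv.le]
    _ = Real.log c⁻¹ + elog (φ I) + elog (φ J) := by rw [elog, if_neg hc_inv.not_ge]

variable {A : Type} [MeasurableSpace A] [MeasurableSingletonClass A]

lemma intlog_genPot [Fintype A] (φ : List A → ℝ) (μ : Measure (ℕ → A)) [IsFiniteMeasure μ] (n : ℕ) :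
    intlog μ (genPot φ n) =
      ∑ w : Fin n → A, (blockProb μ w : EReal) * elog (φ (List.ofFn w)) := by
  simp only [blockProb, cyl_ofFn]
  exact intlog_comp μ (measurable_initialWord n) fun w ↦ φ (List.ofFn w)

variable [Finite A]

lemma intlog_genPot_ne_top (φ : List A → ℝ) (μ : Measure (ℕ → A)) [IsFiniteMeasure μ] (n : ℕ) :
    intlog μ (genPot φ n) ≠ ⊤ := by
  have := Fintype.ofFinite A
  rw [intlog_genPot]
  exact sum_ne_top fun w _ ↦ coe_mul_ne_top (blockProb_nonneg μ w) (elog_ne_top _)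

variable {X : Set (ℕ → A)} {φ : List A → ℝ} {μ : Measure (ℕ → A)} [IsProbabilityMeasure μ]

lemma intlog_genPot_add_le (hφ0 : ∀ I, Lang X I → 0 ≤ φ I) {c : ℝ} (hc : 0 < c)
    (hφc : ∀ I J, Lang X (I ++ J) → φ (I ++ J) ≤ c⁻¹ * φ I * φ J)
    (hμ : MeasurePreserving shiftMap μ μ) (hμX : ∀ᵐ x ∂μ, x ∈ X) (m n : ℕ) :
    intlog μ (genPot φ (m + n)) ≤
      (Real.log c⁻¹ : EReal) + intlog μ (genPot φ m) + intlog μ (genPot φ n) := by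
  have := Fintype.ofFinite A
  calc intlog μ (genPot φ (m + n))
      = ∑ u : Fin m → A, ∑ v : Fin n → A, (blockProb μ (Fin.append u v) : EReal) *
          elog (φ (List.ofFn (Fin.append u v))) := by rw [intlog_genPot, sum_append]
    _ ≤ ∑ u : Fin m → A, ∑ v : Fin n → A, (blockProb μ (Fin.append u v) : EReal) *
          (Real.log c⁻¹ + elog (φ (List.ofFn u)) + elog (φ (List.ofFn v))) := by
        refine Finset.sum_le_sum fun u _ ↦ Finset.sum_le_sum fun v _ ↦ ?_
        rcases eq_or_ne (blockProb μ (Fin.append u v)) 0 with h | h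
        · simp only [h, EReal.coe_zero, zero_mul, le_refl]
        · have hlang := lang_of_blockProb_ne_zero hμX h
          rw [List.ofFn_fin_append] at hlang ⊢
          exact mul_le_mul_of_nonneg_left (elog_append_le hφ0 hc hφc hlang)
            (EReal.coe_nonneg.2 (blockProb_nonneg μ _))
    _ = Real.log c⁻¹ + intlog μ (genPot φ m) + intlog μ (genPot φ n) := by
        rw [sum_sum_coe_mul_add fun u v ↦ blockProb_nonneg μ _]
        simp only [sum_blockProb_append_right, sum_blockProb_append_left hμ]
        rw [sum_coe_mul_const_add (fun u _ ↦ blockProb_nonneg μ u) (sum_blockProb μ m),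
          intlog_genPot, intlog_genPot]

lemma phiStar_genPot_eq_iInf (hφ0 : ∀ I, Lang X I → 0 ≤ φ I) {c : ℝ} (hc : 0 < c)
    (hφc : ∀ I J, Lang X (I ++ J) → φ (I ++ J) ≤ c⁻¹ * φ I * φ J)
    (hμ : MeasurePreserving shiftMap μ μ) (hμX : ∀ᵐ x ∂μ, x ∈ X) :
    PhiStar μ (genPot φ) = ⨅ (n : ℕ) (_ : n ≠ 0),
      (((n : ℝ)⁻¹ : ℝ) : EReal) * (Real.log c⁻¹ + intlog μ (genPot φ n)) :=
  (tendsto_inv_mul_of_almost_subadditive (intlog_genPot_ne_top φ μ)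
    (intlog_genPot_add_le hφ0 hc hφc hμ hμX)).liminf_eq

lemma tendsto_inv_mul_intlog_genPot (hφ : Submult X φ) (hμ : MeasurePreserving shiftMap μ μ)
    (hμX : ∀ᵐ x ∂μ, x ∈ X) :
    Tendsto (fun n : ℕ ↦ (((n : ℝ)⁻¹ : ℝ) : EReal) * intlog μ (genPot φ n)) atTop
      (𝓝 (PhiStar μ (genPot φ))) := by
  obtain ⟨hφ0, -, c, hc, hφc⟩ := hφ
  rw [phiStar_genPot_eq_iInf hφ0 hc hφc hμ hμX]
  exact tendsto_inv_mul_of_almost_subadditive (intlog_genPot_ne_top φ μ)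
    (intlog_genPot_add_le hφ0 hc hφc hμ hμX)

lemma phiStar_genPot_ne_top (hφ : Submult X φ) (hμ : MeasurePreserving shiftMap μ μ)
    (hμX : ∀ᵐ x ∂μ, x ∈ X) : PhiStar μ (genPot φ) ≠ ⊤ := by
  obtain ⟨hφ0, -, c, hc, hφc⟩ := hφ
  rw [phiStar_genPot_eq_iInf hφ0 hc hφc hμ hμX]
  refine ne_top_of_le_ne_top ?_ (iInf₂_le 1 one_ne_zero)
  exact coe_mul_ne_top (by positivity)
    (EReal.add_ne_top (EReal.coe_ne_top _) (intlog_genPot_ne_top φ μ 1))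

end Potential

section InvariantMeasures

variable {A : Type} [MeasurableSpace A] {X : Set (ℕ → A)} {μ : ProbabilityMeasure (ℕ → A)}

lemma mem_MInv_iff (hX : MeasurableSet X) :
    μ ∈ MInv X ↔ MeasurePreserving shiftMap (μ : Measure (ℕ → A)) μ ∧
      ∀ᵐ x ∂(μ : Measure (ℕ → A)), x ∈ X :=
  and_congr ⟨fun h ↦ ⟨measurable_shiftMap, h⟩, fun h ↦ h.map_eq⟩
    (mem_ae_iff_prob_eq_one hX).symm

end InvariantMeasures

section Mixtures

/-- `μ = t μ₁ + (1 - t) μ₂` with `t ∈ [0, 1]`, in the encoding of `ConvexPM` and `IsExtremePM`. -/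
structure IsMixture {Ω : Type*} [MeasurableSpace Ω] (t : ℝ) (μ₁ μ₂ μ : Measure Ω) : Prop where
  nonneg : 0 ≤ t
  le_one : t ≤ 1
  eq : μ = ENNReal.ofReal t • μ₁ + ENNReal.ofReal (1 - t) • μ₂

lemma negMulLog_mixture_le {t p q : ℝ} (ht0 : 0 ≤ t) (ht1 : t ≤ 1) (hp : 0 ≤ p) (hq : 0 ≤ q) :
    Real.negMulLog (t * p + (1 - t) * q) ≤
      t * Real.negMulLog p + (1 - t) * Real.negMulLog q +
        (Real.negMulLog t * p + Real.negMulLog (1 - t) * q) := by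
  have ht1' : 0 ≤ 1 - t := sub_nonneg.2 ht1
  have hadd := negMulLog_add_le (mul_nonneg ht0 hp) (mul_nonneg ht1' hq)
  rw [Real.negMulLog_mul t, Real.negMulLog_mul (1 - t)] at hadd
  linarith

namespace IsMixture

section General

variable {Ω : Type*} [MeasurableSpace Ω] {t : ℝ} {μ₁ μ₂ μ : Measure Ω}

lemma symm (h : IsMixture t μ₁ μ₂ μ) : IsMixture (1 - t) μ₂ μ₁ μ where
  nonneg := sub_nonneg.2 h.le_one
  le_one := sub_le_self _ h.nonneg
  eq := by rw [sub_sub_cancel, add_comm, h.eq]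

lemma real_apply [IsFiniteMeasure μ₁] [IsFiniteMeasure μ₂] (h : IsMixture t μ₁ μ₂ μ) (s : Set Ω) :
    μ.real s = t * μ₁.real s + (1 - t) * μ₂.real s := by
  have h₁ : (ENNReal.ofReal t • μ₁) s ≠ ⊤ :=
    ENNReal.mul_ne_top ENNReal.ofReal_ne_top (measure_ne_top μ₁ s)
  have h₂ : (ENNReal.ofReal (1 - t) • μ₂) s ≠ ⊤ :=
    ENNReal.mul_ne_top ENNReal.ofReal_ne_top (measure_ne_top μ₂ s)
  rw [h.eq, measureReal_add_apply h₁ h₂, measureReal_ennreal_smul_apply,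
    measureReal_ennreal_smul_apply, ENNReal.toReal_ofReal h.nonneg,
    ENNReal.toReal_ofReal (sub_nonneg.2 h.le_one)]

lemma measurePreserving (h : IsMixture t μ₁ μ₂ μ) {f : Ω → Ω} (hf₁ : MeasurePreserving f μ₁ μ₁)
    (hf₂ : MeasurePreserving f μ₂ μ₂) : MeasurePreserving f μ μ := by
  rw [h.eq]
  exact (hf₁.smul_measure _).add_measure (hf₂.smul_measure _)

lemma ae (h : IsMixture t μ₁ μ₂ μ) {p : Ω → Prop} (h₁ : ∀ᵐ x ∂μ₁, p x) (h₂ : ∀ᵐ x ∂μ₂, p x) :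
    ∀ᵐ x ∂μ, p x := by
  rw [h.eq]
  exact ae_add_measure_iff.2 ⟨Measure.ae_smul_measure h₁ _, Measure.ae_smul_measure h₂ _⟩

end General

variable {A : Type} [MeasurableSpace A] {t : ℝ} {μ₁ μ₂ μ : Measure (ℕ → A)}
  [IsProbabilityMeasure μ₁] [IsProbabilityMeasure μ₂]

lemma blockProb_eq (h : IsMixture t μ₁ μ₂ μ) {n : ℕ} (w : Fin n → A) :
    blockProb μ w = t * blockProb μ₁ w + (1 - t) * blockProb μ₂ w :=
  h.real_apply _

lemma le_blockEntropy [Fintype A] (h : IsMixture t μ₁ μ₂ μ) (n : ℕ) :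
    t * blockEntropy μ₁ n + (1 - t) * blockEntropy μ₂ n ≤ blockEntropy μ n := by
  simp only [blockEntropy, Finset.mul_sum, ← Finset.sum_add_distrib, h.blockProb_eq]
  exact Finset.sum_le_sum fun w _ ↦ Real.concaveOn_negMulLog.2 (blockProb_nonneg μ₁ w)
    (blockProb_nonneg μ₂ w) h.nonneg (sub_nonneg.2 h.le_one) (add_sub_cancel t 1)

variable [MeasurableSingletonClass A]

lemma blockEntropy_le [Fintype A] (h : IsMixture t μ₁ μ₂ μ) (n : ℕ) :
    blockEntropy μ n ≤ t * blockEntropy μ₁ n + (1 - t) * blockEntropy μ₂ n +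
      (Real.negMulLog t + Real.negMulLog (1 - t)) := by
  have hweights : Real.negMulLog t + Real.negMulLog (1 - t) =
      ∑ w : Fin n → A, (Real.negMulLog t * blockProb μ₁ w +
        Real.negMulLog (1 - t) * blockProb μ₂ w) := by
    simp only [Finset.sum_add_distrib, ← Finset.mul_sum, sum_blockProb, mul_one]
  rw [hweights]
  simp only [blockEntropy, Finset.mul_sum, ← Finset.sum_add_distrib, h.blockProb_eq]
  exact Finset.sum_le_sum fun w _ ↦ negMulLog_mixture_le h.nonneg h.le_one
    (blockProb_nonneg μ₁ w) (blockProb_nonneg μ₂ w)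

lemma intlog_genPot_eq [Finite A] [IsFiniteMeasure μ] (h : IsMixture t μ₁ μ₂ μ) (φ : List A → ℝ)
    (n : ℕ) :
    intlog μ (genPot φ n) =
      (t : EReal) * intlog μ₁ (genPot φ n) + ((1 - t : ℝ) : EReal) * intlog μ₂ (genPot φ n) := by
  have := Fintype.ofFinite A
  have ht1 : 0 ≤ 1 - t := sub_nonneg.2 h.le_one
  simp only [intlog_genPot, coe_mul_sum h.nonneg, coe_mul_sum ht1, ← Finset.sum_add_distrib]
  refine Finset.sum_congr rfl fun w _ ↦ ?_
  rw [h.blockProb_eq, EReal.coe_add, EReal.coe_mul, EReal.coe_mul, EReal.right_distrib_of_nonneg,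
    mul_assoc, mul_assoc]
  · exact_mod_cast mul_nonneg h.nonneg (blockProb_nonneg μ₁ w)
  · exact_mod_cast mul_nonneg ht1 (blockProb_nonneg μ₂ w)

variable {X : Set (ℕ → A)}

section Invariant

variable [IsProbabilityMeasure μ]
  (hμ₁ : MeasurePreserving shiftMap μ₁ μ₁) (hμ₂ : MeasurePreserving shiftMap μ₂ μ₂)
  (hX₁ : ∀ᵐ x ∂μ₁, x ∈ X) (hX₂ : ∀ᵐ x ∂μ₂, x ∈ X)

include hμ₁ hμ₂ hX₁ hX₂

lemma ent_eq [Fintype A] (h : IsMixture t μ₁ μ₂ μ) :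
    ent X μ = t * ent X μ₁ + (1 - t) * ent X μ₂ := by
  have hμ := tendsto_blockEntropy_div (h.measurePreserving hμ₁ hμ₂) (h.ae hX₁ hX₂)
  have hmix : Tendsto (fun n : ℕ ↦
      (t * blockEntropy μ₁ n + (1 - t) * blockEntropy μ₂ n) / n) atTop
      (𝓝 (t * ent X μ₁ + (1 - t) * ent X μ₂)) := by
    simpa only [add_div, mul_div_assoc] using
      ((tendsto_blockEntropy_div hμ₁ hX₁).const_mul t).add
        ((tendsto_blockEntropy_div hμ₂ hX₂).const_mul (1 - t))
  have hmix_add := hmix.add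
    (tendsto_const_div_atTop_nhds_zero_nat (Real.negMulLog t + Real.negMulLog (1 - t)))
  simp only [← add_div, add_zero] at hmix_add
  refine tendsto_nhds_unique hμ (tendsto_of_tendsto_of_tendsto_of_le_of_le hmix hmix_add
    (fun n ↦ ?_) fun n ↦ ?_)
  · exact div_le_div_of_nonneg_right (h.le_blockEntropy n) n.cast_nonneg
  · exact div_le_div_of_nonneg_right (h.blockEntropy_le n) n.cast_nonneg

lemma phiStar_genPot_eq [Finite A] (h : IsMixture t μ₁ μ₂ μ) {φ : List A → ℝ}
    (hφ : Submult X φ) :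
    PhiStar μ (genPot φ) =
      (t : EReal) * PhiStar μ₁ (genPot φ) + ((1 - t : ℝ) : EReal) * PhiStar μ₂ (genPot φ) := by
  have ht1 : 0 ≤ 1 - t := sub_nonneg.2 h.le_one
  have hμ := tendsto_inv_mul_intlog_genPot hφ (h.measurePreserving hμ₁ hμ₂) (h.ae hX₁ hX₂)
  have hadd : ContinuousAt (fun p : EReal × EReal ↦ p.1 + p.2)
      ((t : EReal) * PhiStar μ₁ (genPot φ), ((1 - t : ℝ) : EReal) * PhiStar μ₂ (genPot φ)) :=
    EReal.continuousAt_add (.inl (coe_mul_ne_top h.nonneg (phiStar_genPot_ne_top hφ hμ₁ hX₁)))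
      (.inr (coe_mul_ne_top ht1 (phiStar_genPot_ne_top hφ hμ₂ hX₂)))
  have hmix := hadd.tendsto.comp
    ((((continuous_const_mul_ereal t).tendsto _).comp
        (tendsto_inv_mul_intlog_genPot hφ hμ₁ hX₁)).prodMk_nhds
      (((continuous_const_mul_ereal (1 - t)).tendsto _).comp
        (tendsto_inv_mul_intlog_genPot hφ hμ₂ hX₂)))
  refine tendsto_nhds_unique hμ (hmix.congr fun n ↦ ?_)
  have hn : (0 : EReal) ≤ (((n : ℝ)⁻¹ : ℝ) : EReal) := EReal.coe_nonneg.2 (by positivity)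
  rw [h.intlog_genPot_eq, EReal.left_distrib_of_nonneg_of_ne_top hn (EReal.coe_ne_top _)]
  simp only [Function.comp_apply, mul_left_comm (((n : ℝ)⁻¹ : ℝ) : EReal)]

end Invariant

lemma eqVal_genPot_eq [Fintype A] {μ₁ μ₂ μ : ProbabilityMeasure (ℕ → A)}
    (h : IsMixture t (μ₁ : Measure (ℕ → A)) (μ₂ : Measure (ℕ → A)) (μ : Measure (ℕ → A)))
    (hX : MeasurableSet X) (h₁ : μ₁ ∈ MInv X) (h₂ : μ₂ ∈ MInv X) {φ : List A → ℝ}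
    (hφ : Submult X φ) :
    eqVal X (genPot φ) μ = (t : EReal) * eqVal X (genPot φ) μ₁ +
      ((1 - t : ℝ) : EReal) * eqVal X (genPot φ) μ₂ := by
  obtain ⟨hμ₁, hX₁⟩ := (mem_MInv_iff hX).1 h₁
  obtain ⟨hμ₂, hX₂⟩ := (mem_MInv_iff hX).1 h₂
  have ht0 : (0 : EReal) ≤ t := EReal.coe_nonneg.2 h.nonneg
  have ht1 : (0 : EReal) ≤ ((1 - t : ℝ) : EReal) := EReal.coe_nonneg.2 (sub_nonneg.2 h.le_one)
  rw [eqVal, h.phiStar_genPot_eq hμ₁ hμ₂ hX₁ hX₂ hφ, h.ent_eq hμ₁ hμ₂ hX₁ hX₂, eqVal, eqVal,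
    EReal.left_distrib_of_nonneg_of_ne_top ht0 (EReal.coe_ne_top _),
    EReal.left_distrib_of_nonneg_of_ne_top ht1 (EReal.coe_ne_top _), EReal.coe_add, EReal.coe_mul,
    EReal.coe_mul, add_add_add_comm]

end IsMixture

end Mixtures

section KrylovBogoliubov

section EmpiricalMeasure

variable {Ω : Type*} [MeasurableSpace Ω]

/-- The average of the Dirac masses at `x, T x, …, T^n x`; the shift in the index keeps the number
of points positive. -/
noncomputable def empiricalMeasure (T : Ω → Ω) (x : Ω) (n : ℕ) : Measure Ω :=
  ((n + 1 : ℕ) : ℝ≥0∞)⁻¹ • ∑ i ∈ Finset.range (n + 1), Measure.dirac (T^[i] x)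

lemma empiricalMeasure_apply_of_mapsTo {T : Ω → Ω} {X : Set Ω} (hT : Set.MapsTo T X X) {x : Ω}
    (hx : x ∈ X) (n : ℕ) : empiricalMeasure T x n X = 1 := by
  have hdirac (i : ℕ) : Measure.dirac (T^[i] x) X = 1 :=
    Measure.dirac_apply_of_mem (hT.iterate i hx)
  rw [empiricalMeasure, Measure.smul_apply, Measure.finsetSum_apply]
  simp only [hdirac, Finset.sum_const, Finset.card_range, nsmul_eq_mul, mul_one, smul_eq_mul]
  exact ENNReal.inv_mul_cancel (Nat.cast_ne_zero.2 n.succ_ne_zero) (ENNReal.natCast_ne_top _)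

instance isProbabilityMeasure_empiricalMeasure (T : Ω → Ω) (x : Ω) (n : ℕ) :
    IsProbabilityMeasure (empiricalMeasure T x n) :=
  ⟨empiricalMeasure_apply_of_mapsTo (Set.mapsTo_univ T Set.univ) (Set.mem_univ x) n⟩

lemma integral_empiricalMeasure (T : Ω → Ω) (x : Ω) (n : ℕ) {f : Ω → ℝ}
    (hf : StronglyMeasurable f) :
    ∫ y, f y ∂empiricalMeasure T x n = birkhoffAverage ℝ T f (n + 1) x := by
  rw [empiricalMeasure, integral_smul_measure, integral_finsetSum_measure]
  · simp only [integral_dirac' _ _ hf, ENNReal.toReal_inv, ENNReal.toReal_natCast,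
      birkhoffAverage, birkhoffSum]
  · exact fun i _ ↦ integrable_dirac' hf enorm_lt_top

end EmpiricalMeasure

variable {Ω : Type*} [MeasurableSpace Ω] [TopologicalSpace Ω] [BorelSpace Ω]
  [HasOuterApproxClosed Ω]

lemma isClosed_setOf_apply_eq_one {X : Set Ω} (hX : IsClosed X) :
    IsClosed {μ : ProbabilityMeasure Ω | (μ : Measure Ω) X = 1} := by
  refine isClosed_iff_ultrafilter.2 fun μ u hu hs ↦ prob_le_one.antisymm ?_
  have hlim : limsup (fun ν : ProbabilityMeasure Ω ↦ (ν : Measure Ω) X) u = 1 :=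
    (tendsto_const_nhds.congr' (EventuallyEq.symm hs)).limsup_eq
  exact hlim.symm.trans_le (ProbabilityMeasure.limsup_measure_closed_le_of_tendsto hu hX)

lemma isClosed_setOf_map_eq {T : Ω → Ω} (hT : Continuous T) :
    IsClosed {μ : ProbabilityMeasure Ω | (μ : Measure Ω).map T = μ} := by
  convert isClosed_eq (ProbabilityMeasure.continuous_map hT) continuous_id using 3 with μ
  exact (Subtype.ext_iff (a1 := μ.map hT.aemeasurable) (a2 := μ)).symm

lemma map_eq_of_tendsto_empiricalMeasure {T : Ω → Ω} (hT : Continuous T) {x : Ω} {F : Filter ℕ}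
    [F.NeBot] (hF : F ≤ atTop) {μ : ProbabilityMeasure Ω}
    (hμ : Tendsto (β := ProbabilityMeasure Ω) (fun n ↦ ⟨empiricalMeasure T x n, inferInstance⟩) F
      (𝓝 μ)) : (μ : Measure Ω).map T = μ := by
  have : IsProbabilityMeasure ((μ : Measure Ω).map T) :=
    Measure.isProbabilityMeasure_map hT.aemeasurable
  refine ext_of_forall_integral_eq_of_IsFiniteMeasure fun f ↦ ?_
  have hlim (g : BoundedContinuousFunction Ω ℝ) :
      Tendsto (fun n ↦ birkhoffAverage ℝ T g (n + 1) x) F (𝓝 (∫ y, g y ∂(μ : Measure Ω))) :=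
    (ProbabilityMeasure.tendsto_iff_forall_integral_tendsto.1 hμ g).congr fun n ↦
      integral_empiricalMeasure T x n g.continuous.measurable.stronglyMeasurable
  have hcomp (n : ℕ) :
      birkhoffAverage ℝ T (f.compContinuous ⟨T, hT⟩) n x = birkhoffAverage ℝ T f n (T x) := by
    simp only [birkhoffAverage, birkhoffSum, BoundedContinuousFunction.compContinuous_apply,
      ContinuousMap.coe_mk, ← Function.iterate_succ_apply', Function.iterate_succ_apply]
  have hdiff := (tendsto_birkhoffAverage_apply_sub_birkhoffAverage' ℝ f.isBounded_range T x).comp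
    ((tendsto_add_atTop_nat 1).mono_left hF)
  have hlim_comp := hlim (f.compContinuous ⟨T, hT⟩)
  simp only [hcomp] at hlim_comp
  rw [integral_map hT.aemeasurable f.continuous.measurable.aestronglyMeasurable]
  exact sub_eq_zero.1 (tendsto_nhds_unique (hlim_comp.sub (hlim f)) hdiff)

lemma exists_map_eq_and_apply_eq_one [T2Space Ω] [CompactSpace Ω] {T : Ω → Ω} (hT : Continuous T)
    {X : Set Ω} (hX : IsClosed X) (hne : X.Nonempty) (hTX : Set.MapsTo T X X) :
    ∃ μ : ProbabilityMeasure Ω, (μ : Measure Ω).map T = μ ∧ (μ : Measure Ω) X = 1 := by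
  obtain ⟨x, hx⟩ := hne
  let ν (n : ℕ) : ProbabilityMeasure Ω := ⟨empiricalMeasure T x n, inferInstance⟩
  obtain ⟨μ, -, hμ⟩ := isCompact_univ.ultrafilter_le_nhds ((hyperfilter ℕ).map ν) (by simp)
  exact ⟨μ, map_eq_of_tendsto_empiricalMeasure hT Nat.hyperfilter_le_atTop hμ,
    (isClosed_setOf_apply_eq_one hX).mem_of_tendsto hμ
      (.of_forall fun n ↦ empiricalMeasure_apply_of_mapsTo hTX hx n)⟩

end KrylovBogoliubov

section Pressure

variable {A : Type} [TopologicalSpace A]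

lemma continuous_shiftMap : Continuous (shiftMap : (ℕ → A) → ℕ → A) :=
  continuous_pi fun n ↦ continuous_apply (n + 1)

lemma continuous_initialWord (n : ℕ) : Continuous (initialWord n : (ℕ → A) → Fin n → A) :=
  continuous_pi fun i ↦ continuous_apply (i : ℕ)

variable [DiscreteTopology A] [MeasurableSpace A] [BorelSpace A]

lemma isCompact_MInv [Finite A] {X : Set (ℕ → A)} (hX : IsClosed X) : IsCompact (MInv X) :=
  ((isClosed_setOf_map_eq continuous_shiftMap).inter (isClosed_setOf_apply_eq_one hX)).isCompact

lemma nonempty_MInv [Finite A] {X : Set (ℕ → A)} (hX : IsSubshift X) : (MInv X).Nonempty :=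
  exists_map_eq_and_apply_eq_one continuous_shiftMap hX.2.1.isClosed hX.1
    (Set.mapsTo_iff_image_subset.2 hX.2.2)

lemma continuous_blockProb [Finite A] {n : ℕ} (w : Fin n → A) :
    Continuous fun μ : ProbabilityMeasure (ℕ → A) ↦ blockProb (μ : Measure (ℕ → A)) w := by
  have hclopen : IsClopen (cyl (List.ofFn w)) := by
    rw [cyl_ofFn]
    exact (isClopen_discrete {w}).preimage (continuous_initialWord n)
  exact continuous_iff_continuousAt.2 fun μ ↦ (NNReal.continuous_coe.tendsto _).comp
    (ProbabilityMeasure.tendsto_measure_of_isClopen_of_tendsto tendsto_id hclopen)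

lemma continuous_blockEntropy [Fintype A] (n : ℕ) :
    Continuous fun μ : ProbabilityMeasure (ℕ → A) ↦ blockEntropy (μ : Measure (ℕ → A)) n :=
  continuous_finsetSum _ fun w _ ↦ Real.continuous_negMulLog.comp (continuous_blockProb w)

lemma upperSemicontinuous_intlog_genPot [Finite A] (φ : List A → ℝ) (n : ℕ) :
    UpperSemicontinuous fun μ : ProbabilityMeasure (ℕ → A) ↦
      intlog (μ : Measure (ℕ → A)) (genPot φ n) := by
  have := Fintype.ofFinite A
  simp only [intlog_genPot]
  exact upperSemicontinuous_sum_ereal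
    (fun w _ ↦ upperSemicontinuous_coe_mul (continuous_blockProb w)
      (fun μ ↦ blockProb_nonneg _ w) (elog_ne_top _))
    fun w _ μ ↦ coe_mul_ne_top (blockProb_nonneg _ w) (elog_ne_top _)

variable {X : Set (ℕ → A)} {φ : List A → ℝ}

lemma upperSemicontinuousOn_ent [Fintype A] (hX : MeasurableSet X) :
    UpperSemicontinuousOn (fun μ : ProbabilityMeasure (ℕ → A) ↦
      (ent X (μ : Measure (ℕ → A)) : EReal)) (MInv X) := by
  have hiInf : UpperSemicontinuous fun μ : ProbabilityMeasure (ℕ → A) ↦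
      ⨅ (n : ℕ) (_ : n ≠ 0), (((n : ℝ)⁻¹ : ℝ) : EReal) *
        (blockEntropy (μ : Measure (ℕ → A)) n : EReal) :=
    upperSemicontinuous_biInf fun n _ ↦ ((continuous_const_mul_ereal _).comp
      (continuous_coe_real_ereal.comp (continuous_blockEntropy n))).upperSemicontinuous
  refine upperSemicontinuousOn_of_eqOn hiInf fun μ hμ ↦ ?_
  obtain ⟨hμ_inv, hμX⟩ := (mem_MInv_iff hX).1 hμ
  exact coe_ent_eq_iInf hμ_inv hμX

lemma upperSemicontinuousOn_phiStar_genPot [Finite A] (hX : MeasurableSet X)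
    (hφ : Submult X φ) :
    UpperSemicontinuousOn (fun μ : ProbabilityMeasure (ℕ → A) ↦
      PhiStar (μ : Measure (ℕ → A)) (genPot φ)) (MInv X) := by
  obtain ⟨hφ0, -, c, hc, hφc⟩ := hφ
  have hiInf : UpperSemicontinuous fun μ : ProbabilityMeasure (ℕ → A) ↦
      ⨅ (n : ℕ) (_ : n ≠ 0), (((n : ℝ)⁻¹ : ℝ) : EReal) *
        (Real.log c⁻¹ + intlog (μ : Measure (ℕ → A)) (genPot φ n)) := by
    refine upperSemicontinuous_biInf fun n _ ↦
      (continuous_const_mul_ereal _).comp_upperSemicontinuous ?_ ?_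
    · exact upperSemicontinuous_const.add' (upperSemicontinuous_intlog_genPot φ n) fun μ ↦
        EReal.continuousAt_add (.inl (EReal.coe_ne_top _)) (.inl (EReal.coe_ne_bot _))
    · exact fun a b hab ↦ mul_le_mul_of_nonneg_left hab (EReal.coe_nonneg.2 (by positivity))
  refine upperSemicontinuousOn_of_eqOn hiInf fun μ hμ ↦ ?_
  obtain ⟨hμ_inv, hμX⟩ := (mem_MInv_iff hX).1 hμ
  exact phiStar_genPot_eq_iInf hφ0 hc hφc hμ_inv hμX

lemma upperSemicontinuousOn_eqVal_genPot [Fintype A] (hX : MeasurableSet X)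
    (hφ : Submult X φ) :
    UpperSemicontinuousOn (eqVal X (genPot φ)) (MInv X) :=
  (upperSemicontinuousOn_phiStar_genPot hX hφ).add' (upperSemicontinuousOn_ent hX) fun _ _ ↦
    EReal.continuousAt_add (.inr (EReal.coe_ne_bot _)) (.inr (EReal.coe_ne_top _))

end Pressure

section Faces

variable {Ω : Type*} [MeasurableSpace Ω]

/-- `F` is a face of `S`; that the second component also lies in `F` follows by exchanging the
roles of the two components. -/
structure IsFacePM (S F : Set (ProbabilityMeasure Ω)) : Prop where
  subset : F ⊆ S
  left_mem : ∀ μ₁ ∈ S, ∀ μ₂ ∈ S, ∀ t : ℝ, 0 < t → t < 1 → ∀ μ ∈ F,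
    IsMixture t (μ₁ : Measure Ω) (μ₂ : Measure Ω) (μ : Measure Ω) → μ₁ ∈ F

namespace IsExtremePM

lemma of_isFacePM {S F : Set (ProbabilityMeasure Ω)} {μ : ProbabilityMeasure Ω}
    (hμ : IsExtremePM F μ) (hF : IsFacePM S F) : IsExtremePM S μ := by
  refine ⟨hF.subset hμ.1, fun μ₁ h₁ μ₂ h₂ t ht0 ht1 heq ↦ ?_⟩
  have hmix : IsMixture t (μ₁ : Measure Ω) (μ₂ : Measure Ω) (μ : Measure Ω) :=
    ⟨ht0.le, ht1.le, heq⟩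
  exact hμ.2 μ₁ (hF.left_mem μ₁ h₁ μ₂ h₂ t ht0 ht1 μ hμ.1 hmix)
    μ₂ (hF.left_mem μ₂ h₂ μ₁ h₁ (1 - t) (sub_pos.2 ht1) (sub_lt_self 1 ht0) μ hμ.1 hmix.symm)
    t ht0 ht1 heq

lemma ergodic {f : Ω → Ω} {μ : ProbabilityMeasure Ω}
    (h : IsExtremePM {ν : ProbabilityMeasure Ω | MeasurePreserving f (ν : Measure Ω) ν} μ) :
    Ergodic f (μ : Measure Ω) := by
  refine .of_mem_extremePoints (mem_extremePoints_iff_left.2 ⟨⟨h.1, inferInstance⟩, ?_⟩)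
  rintro μ₁ ⟨hμ₁, _⟩ μ₂ ⟨hμ₂, _⟩ ⟨a, b, ha, hb, hab, heq⟩
  have ha_ne : a ≠ ⊤ := ne_top_of_le_ne_top ENNReal.one_ne_top (le_self_add.trans_eq hab)
  have hb_ne : b ≠ ⊤ := ne_top_of_le_ne_top ENNReal.one_ne_top (le_add_self.trans_eq hab)
  have hsum : a.toReal + b.toReal = 1 := by
    rw [← ENNReal.toReal_add ha_ne hb_ne, hab, ENNReal.toReal_one]
  have ha_pos := ENNReal.toReal_pos ha.ne' ha_ne
  have hb_pos := ENNReal.toReal_pos hb.ne' hb_ne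
  have hμ₁₂ : μ₁ = μ₂ := congrArg ProbabilityMeasure.toMeasure <|
    h.2 ⟨μ₁, inferInstance⟩ hμ₁ ⟨μ₂, inferInstance⟩ hμ₂ a.toReal ha_pos (by linarith) <| by
      rw [← eq_sub_of_add_eq' hsum, ENNReal.ofReal_toReal ha_ne, ENNReal.ofReal_toReal hb_ne]
      exact heq.symm
  rw [← heq, ← hμ₁₂, ← add_smul, hab, one_smul]

end IsExtremePM

lemma IsMixture.ae_left {t : ℝ} (ht : 0 < t) {μ₁ μ₂ μ : Measure Ω} (h : IsMixture t μ₁ μ₂ μ)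
    {p : Ω → Prop} (hp : ∀ᵐ x ∂μ, p x) : ∀ᵐ x ∂μ₁, p x := by
  rw [h.eq, ae_add_measure_iff] at hp
  exact (Measure.ae_ennreal_smul_measure_iff (ENNReal.ofReal_pos.2 ht).ne').1 hp.1

end Faces

section EquilibriumStates

variable {A : Type} [MeasurableSpace A] {X : Set (ℕ → A)}

lemma isFacePM_MInv (hX : MeasurableSet X) :
    IsFacePM {μ : ProbabilityMeasure (ℕ → A) |
      MeasurePreserving shiftMap (μ : Measure (ℕ → A)) μ} (MInv X) where
  subset _ hμ := ((mem_MInv_iff hX).1 hμ).1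
  left_mem _ h₁ _ _ _ ht0 _ _ hμ h :=
    (mem_MInv_iff hX).2 ⟨h₁, h.ae_left ht0 ((mem_MInv_iff hX).1 hμ).2⟩

lemma convexPM_MInv (hX : MeasurableSet X) : ConvexPM (MInv X) := by
  intro μ₁ h₁ μ₂ h₂ t ht0 ht1 μ heq
  have hmix : IsMixture t (μ₁ : Measure (ℕ → A)) (μ₂ : Measure (ℕ → A)) (μ : Measure (ℕ → A)) :=
    ⟨ht0, ht1, heq⟩
  rw [mem_MInv_iff hX] at h₁ h₂ ⊢
  exact ⟨hmix.measurePreserving h₁.1 h₂.1, hmix.ae h₁.2 h₂.2⟩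

variable [Fintype A] [MeasurableSingletonClass A] {φ : List A → ℝ}

lemma eqVal_genPot_ne_top (hX : MeasurableSet X) (hφ : Submult X φ)
    {μ : ProbabilityMeasure (ℕ → A)} (hμ : μ ∈ MInv X) : eqVal X (genPot φ) μ ≠ ⊤ := by
  obtain ⟨hμ_inv, hμX⟩ := (mem_MInv_iff hX).1 hμ
  exact EReal.add_ne_top (phiStar_genPot_ne_top hφ hμ_inv hμX) (EReal.coe_ne_top _)

lemma convexPM_EqSet_genPot (hX : MeasurableSet X) (hφ : Submult X φ) :
    ConvexPM (EqSet X (genPot φ)) := by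
  rintro μ₁ ⟨h₁, hs₁⟩ μ₂ ⟨h₂, hs₂⟩ t ht0 ht1 μ heq
  refine ⟨convexPM_MInv hX μ₁ h₁ μ₂ h₂ t ht0 ht1 μ heq, ?_⟩
  rw [IsMixture.eqVal_genPot_eq ⟨ht0, ht1, heq⟩ hX h₁ h₂ hφ, hs₁, hs₂,
    ← EReal.right_distrib_of_nonneg (EReal.coe_nonneg.2 ht0)
      (EReal.coe_nonneg.2 (sub_nonneg.2 ht1)),
    ← EReal.coe_add, add_sub_cancel, EReal.coe_one, one_mul]

lemma isFacePM_EqSet_genPot (hX : MeasurableSet X) (hφ : Submult X φ) :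
    IsFacePM (MInv X) (EqSet X (genPot φ)) where
  subset _ hμ := hμ.1
  left_mem := by
    rintro μ₁ h₁ μ₂ h₂ t ht0 ht1 μ ⟨hμ, hs⟩ hmix
    have hle {ν : ProbabilityMeasure (ℕ → A)} (hν : ν ∈ MInv X) :
        eqVal X (genPot φ) ν ≤ ⨆ η ∈ MInv X, eqVal X (genPot φ) η :=
      le_iSup₂ (f := fun η _ ↦ eqVal X (genPot φ) η) ν hν
    exact ⟨h₁, eq_left_of_le_of_eq_convex_combination ht0 ht1
      (hs ▸ eqVal_genPot_ne_top hX hφ hμ) (hle h₁) (hle h₂)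
      (hs.symm.trans (hmix.eqVal_genPot_eq hX h₁ h₂ hφ))⟩

end EquilibriumStates

/-- Proposition 3.2(ii) / `pro-2.1`(ii): the set of equilibrium states of a
potential generated by a sub-multiplicative word function is non-empty, compact, convex,
and its extreme points are ergodic. -/
theorem weighted_eq_states_stmt_4 {A : Type} [Fintype A] [TopologicalSpace A]
    [DiscreteTopology A] [MeasurableSpace A] [BorelSpace A]
    (X : Set (ℕ → A)) (hX : IsSubshift X)
    (φ : List A → ℝ) (hφ : Submult X φ) :
    (EqSet X (genPot φ)).Nonempty ∧ IsCompact (EqSet X (genPot φ)) ∧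
      ConvexPM (EqSet X (genPot φ)) ∧
      ∀ μ : ProbabilityMeasure (ℕ → A), IsExtremePM (EqSet X (genPot φ)) μ →
        Ergodic shiftMap (μ : Measure (ℕ → A)) := by
  have hXm : MeasurableSet X := hX.2.1.isClosed.measurableSet
  have hcompact : IsCompact (MInv X) := isCompact_MInv hX.2.1.isClosed
  have husc := upperSemicontinuousOn_eqVal_genPot hXm hφ
  refine ⟨nonempty_maximizers (nonempty_MInv hX) hcompact husc, isCompact_maximizers hcompact husc,
    convexPM_EqSet_genPot hXm hφ, fun μ hμ ↦ ?_⟩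
  exact ((hμ.of_isFacePM (isFacePM_EqSet_genPot hXm hφ)).of_isFacePM (isFacePM_MInv hXm)).ergodic
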